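/- arXiv:2512.05838 — 5 statements merged into one kernel-verified Lean document; each statement's English description precedes it below -/
import Mathlib

section
/- Let H : ℝᵈ → ℝ be of class C² and let σ : ℝᵈ → ℝ^{d×k} have C¹ entries, with columns σʲ : ℝᵈ → ℝᵈ for j = 1,…,k. Assume that for all x ∈ ℝᵈ and all j we have ⟨∇H(x), σʲ(x)⟩ = 0. Then for all x ∈ ℝᵈ: tr(σ(x) σ(x)ᵀ D²H(x)) = − ⟨∇H(x), Σ_{j=1}^k (Dσʲ)(x) · σʲ(x)⟩, where D²H(x) is the Hessian matrix of H at x and (Dσʲ)(x) ∈ ℝ^{d×d} is the Jacobian matrix of σʲ at x. -/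
open Matrix

/-- The gradient of `H : ℝᵈ → ℝ` at `x`, as a vector of partial derivatives. -/
noncomputable def gradVec {d : ℕ} (H : (Fin d → ℝ) → ℝ) (x : Fin d → ℝ) : Fin d → ℝ :=
  fun i => fderiv ℝ H x (Pi.single i 1)

/-- The Hessian matrix of `H : ℝᵈ → ℝ` at `x`. -/
noncomputable def hessMat {d : ℕ} (H : (Fin d → ℝ) → ℝ) (x : Fin d → ℝ) :
    Matrix (Fin d) (Fin d) ℝ :=
  fun i j => fderiv ℝ (fun y => fderiv ℝ H y (Pi.single j 1)) x (Pi.single i 1)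

/-- The Jacobian matrix of a map `g : ℝᵈ → ℝᵈ` at `x`. -/
noncomputable def jacMat {d : ℕ} (g : (Fin d → ℝ) → (Fin d → ℝ)) (x : Fin d → ℝ) :
    Matrix (Fin d) (Fin d) ℝ :=
  fun i l => fderiv ℝ (fun y => g y i) x (Pi.single l 1)

/-- If `H` is `C²`, the entries of `σ : ℝᵈ → ℝ^{d×k}` are `C¹`, and
`⟨∇H(x), σʲ(x)⟩ = 0` for every `x` and every column `j`, then
`tr(σ(x) σ(x)ᵀ D²H(x)) = − ⟨∇H(x), Σⱼ (Dσʲ)(x) σʲ(x)⟩`. -/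
theorem trace_sigma_sigmaT_hessian_eq_neg_stratonovich
    {d k : ℕ} (H : (Fin d → ℝ) → ℝ) (σ : (Fin d → ℝ) → Matrix (Fin d) (Fin k) ℝ)
    (hH : ContDiff ℝ 2 H)
    (hσ : ∀ (i : Fin d) (j : Fin k), ContDiff ℝ 1 (fun x => σ x i j))
    (horth : ∀ (x : Fin d → ℝ) (j : Fin k),
      gradVec H x ⬝ᵥ (fun i => σ x i j) = 0) :
    ∀ x : Fin d → ℝ,
      Matrix.trace (σ x * (σ x)ᵀ * hessMat H x)
        = - (gradVec H x ⬝ᵥ ∑ j : Fin k,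
              (jacMat (fun y i => σ y i j) x) *ᵥ (fun i => σ x i j)) := by
  intro x
  have hG : ∀ i : Fin d, DifferentiableAt ℝ (fun y => fderiv ℝ H y (Pi.single i 1)) x := by
    intro i
    have h1 : ContDiff ℝ 1 (fderiv ℝ H) := hH.fderiv_right (by norm_num)
    exact ((h1.differentiable (by norm_num)) x).clm_apply (differentiableAt_const _)
  have hS : ∀ (i : Fin d) (j : Fin k), DifferentiableAt ℝ (fun y => σ y i j) x :=
    fun i j => (hσ i j).differentiable (by norm_num) x
  have key : ∀ (j : Fin k) (l : Fin d),
      ∑ i, (gradVec H x i * jacMat (fun y i => σ y i j) x i l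
        + σ x i j * hessMat H x l i) = 0 := by
    intro j l
    have h1 : HasFDerivAt (fun y => ∑ i, fderiv ℝ H y (Pi.single i 1) * σ y i j) _ x :=
      HasFDerivAt.fun_sum (u := Finset.univ)
        (fun i _ => (hG i).hasFDerivAt.mul (hS i j).hasFDerivAt)
    have h2 : (fun y => ∑ i, fderiv ℝ H y (Pi.single i 1) * σ y i j) = fun _ => (0 : ℝ) :=
      funext fun y => horth y j
    rw [h2] at h1
    have h3 := congrArg (fun L => L (Pi.single l 1)) (h1.unique (hasFDerivAt_const (0 : ℝ) x))
    simpa [gradVec, jacMat, hessMat] using h3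
  have e1 : Matrix.trace (σ x * (σ x)ᵀ * hessMat H x)
      = ∑ j, ∑ l, σ x l j * ∑ i, σ x i j * hessMat H x l i := by
    simp only [Matrix.trace, Matrix.diag, Matrix.mul_apply, Matrix.transpose_apply,
      Finset.sum_mul, Finset.mul_sum]
    rw [Finset.sum_comm' (t' := Finset.univ) (s' := fun _ => Finset.univ) (by simp)]
    rw [Finset.sum_congr rfl fun l _ => Finset.sum_comm, Finset.sum_comm]
    refine Finset.sum_congr rfl fun j _ => Finset.sum_congr rfl fun l _ =>
      Finset.sum_congr rfl fun i _ => by ring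
  have e2 : (gradVec H x ⬝ᵥ ∑ j : Fin k,
        (jacMat (fun y i => σ y i j) x) *ᵥ (fun i => σ x i j))
      = ∑ j, ∑ l, σ x l j * ∑ i, gradVec H x i * jacMat (fun y i => σ y i j) x i l := by
    simp only [dotProduct, Matrix.mulVec, Finset.sum_apply, Finset.mul_sum]
    rw [Finset.sum_comm]
    refine Finset.sum_congr rfl fun j _ => ?_
    rw [Finset.sum_comm]
    refine Finset.sum_congr rfl fun l _ => Finset.sum_congr rfl fun i _ => by ring
  rw [e1, e2, eq_neg_iff_add_eq_zero, ← Finset.sum_add_distrib]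
  refine Finset.sum_eq_zero fun j _ => ?_
  rw [← Finset.sum_add_distrib]
  refine Finset.sum_eq_zero fun l _ => ?_
  have := key j l
  rw [Finset.sum_add_distrib] at this
  rw [← mul_add, add_comm, this, mul_zero]
end

section
/- Let Q ∈ ℝ^{d×d} be symmetric, let J, R, 𝔄̄(j) ∈ ℝ^{d×d} (j = 1,…,k), F, P ∈ ℝ^{d×n}, S, N ∈ ℝ^{n×n} satisfy Jᵀ = −J, Rᵀ = R, Sᵀ = S, Nᵀ = −N, and define A = (J − R − ½ Σ_{j=1}^k 𝔄̄(j)ᵀ Q 𝔄̄(j))Q, B = F − P, 𝔄(j) = 𝔄̄(j)Q for all j, C = (F + P + Σ_{j=1}^k 𝔄̄(j)ᵀ Q 𝔅(j))ᵀ Q, D = S + N + ½ Σ_{j=1}^k 𝔅(j)ᵀ Q 𝔅(j), where 𝔅(j) ∈ ℝ^{d×n} are arbitrary. Then 𝔐_Q = −2 · [[QRQ, QP], [PᵀQ, S]]. -/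
open Matrix

/-- The block matrix `𝔐_Q` associated with the linear stochastic system and the
quadratic Hamiltonian `H(x) = ½⟨Qx, x⟩`. -/
noncomputable def frakM {d n k : ℕ}
    (A : Matrix (Fin d) (Fin d) ℝ) (B : Matrix (Fin d) (Fin n) ℝ)
    (C : Matrix (Fin n) (Fin d) ℝ) (D : Matrix (Fin n) (Fin n) ℝ)
    (𝔄 : Fin k → Matrix (Fin d) (Fin d) ℝ) (𝔅 : Fin k → Matrix (Fin d) (Fin n) ℝ)
    (Q : Matrix (Fin d) (Fin d) ℝ) :
    Matrix (Fin d ⊕ Fin n) (Fin d ⊕ Fin n) ℝ :=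
  Matrix.fromBlocks
    (Q * A + Aᵀ * Q + ∑ j : Fin k, (𝔄 j)ᵀ * Q * 𝔄 j)
    (Q * B - Cᵀ + ∑ j : Fin k, (𝔄 j)ᵀ * Q * 𝔅 j)
    (Bᵀ * Q - C + ∑ j : Fin k, (𝔅 j)ᵀ * Q * 𝔄 j)
    (-(D + Dᵀ) + ∑ j : Fin k, (𝔅 j)ᵀ * Q * 𝔅 j)

/-- For an SLTI-PHS the matrix `𝔐_Q` equals `−2 [[QRQ, QP], [PᵀQ, S]]`. -/
theorem frakM_of_SLTIPHS {d n k : ℕ}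
    (Q J R : Matrix (Fin d) (Fin d) ℝ)
    (𝔄bar : Fin k → Matrix (Fin d) (Fin d) ℝ)
    (F P : Matrix (Fin d) (Fin n) ℝ)
    (S N : Matrix (Fin n) (Fin n) ℝ)
    (𝔅 : Fin k → Matrix (Fin d) (Fin n) ℝ)
    (hQ : Qᵀ = Q) (hJ : Jᵀ = -J) (hR : Rᵀ = R) (hS : Sᵀ = S) (hN : Nᵀ = -N)
    (A : Matrix (Fin d) (Fin d) ℝ)
    (hA : A = (J - R - (1 / 2 : ℝ) • ∑ j : Fin k, (𝔄bar j)ᵀ * Q * 𝔄bar j) * Q)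
    (B : Matrix (Fin d) (Fin n) ℝ) (hB : B = F - P)
    (𝔄 : Fin k → Matrix (Fin d) (Fin d) ℝ) (h𝔄 : ∀ j : Fin k, 𝔄 j = 𝔄bar j * Q)
    (C : Matrix (Fin n) (Fin d) ℝ)
    (hC : C = (F + P + ∑ j : Fin k, (𝔄bar j)ᵀ * Q * 𝔅 j)ᵀ * Q)
    (D : Matrix (Fin n) (Fin n) ℝ)
    (hD : D = S + N + (1 / 2 : ℝ) • ∑ j : Fin k, (𝔅 j)ᵀ * Q * 𝔅 j) :
    frakM A B C D 𝔄 𝔅 Q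
      = (-2 : ℝ) • Matrix.fromBlocks (Q * R * Q) (Q * P) (Pᵀ * Q) S := by
  have hS1 : ∑ j : Fin k, (𝔄 j)ᵀ * Q * 𝔄 j
      = Q * (∑ j : Fin k, (𝔄bar j)ᵀ * Q * 𝔄bar j) * Q := by
    simp only [h𝔄, Matrix.mul_sum, Matrix.sum_mul, Matrix.transpose_mul, hQ, Matrix.mul_assoc]
  have hS2 : ∑ j : Fin k, (𝔄 j)ᵀ * Q * 𝔅 j
      = Q * ∑ j : Fin k, (𝔄bar j)ᵀ * Q * 𝔅 j := by
    simp only [h𝔄, Matrix.mul_sum, Matrix.transpose_mul, hQ, Matrix.mul_assoc]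
  have hS3 : ∑ j : Fin k, (𝔅 j)ᵀ * Q * 𝔄 j
      = (∑ j : Fin k, (𝔄bar j)ᵀ * Q * 𝔅 j)ᵀ * Q := by
    simp only [h𝔄, Matrix.sum_mul, Matrix.transpose_sum, Matrix.transpose_mul,
      Matrix.transpose_transpose, hQ, Matrix.mul_assoc]
  have hT1 : (∑ j : Fin k, (𝔄bar j)ᵀ * Q * 𝔄bar j)ᵀ
      = ∑ j : Fin k, (𝔄bar j)ᵀ * Q * 𝔄bar j := by
    simp only [Matrix.transpose_sum, Matrix.transpose_mul,
      Matrix.transpose_transpose, hQ, Matrix.mul_assoc]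
  have hT2 : (∑ j : Fin k, (𝔅 j)ᵀ * Q * 𝔅 j)ᵀ
      = ∑ j : Fin k, (𝔅 j)ᵀ * Q * 𝔅 j := by
    simp only [Matrix.transpose_sum, Matrix.transpose_mul,
      Matrix.transpose_transpose, hQ, Matrix.mul_assoc]
  unfold frakM
  rw [hS1, hS2, hS3, Matrix.fromBlocks_smul]
  subst hA hB hC hD
  generalize (∑ j : Fin k, (𝔄bar j)ᵀ * Q * 𝔄bar j) = X at *
  generalize (∑ j : Fin k, (𝔄bar j)ᵀ * Q * 𝔅 j) = Y at *
  generalize (∑ j : Fin k, (𝔅 j)ᵀ * Q * 𝔅 j) = Z at *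
  congr 1
  all_goals
    simp only [Matrix.transpose_mul, Matrix.transpose_add, Matrix.transpose_sub,
      Matrix.transpose_smul, Matrix.transpose_transpose, hQ, hJ, hR, hS, hN, hT1, hT2,
      Matrix.mul_add, Matrix.add_mul, Matrix.mul_sub, Matrix.sub_mul, Matrix.mul_smul,
      Matrix.smul_mul, Matrix.mul_neg, Matrix.neg_mul, Matrix.mul_assoc]
    module
end

section
/- Suppose the matrices A, B, 𝔄(j), 𝔅(j) (j = 1,…,k), C, D form an SLTI-PHS structure with a symmetric positive semidefinite matrix Q ∈ ℝ^{d×d}. Then 𝔐_Q is negative semidefinite, i.e., −𝔐_Q is positive semidefinite. -/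
open Matrix

/-- If the system matrices form an SLTI-PHS structure with a positive semidefinite `Q`,
then `𝔐_Q` is negative semidefinite. -/
theorem frakM_negSemidef_of_SLTIPHS {d n k : ℕ}
    (A : Matrix (Fin d) (Fin d) ℝ) (B : Matrix (Fin d) (Fin n) ℝ)
    (𝔄 : Fin k → Matrix (Fin d) (Fin d) ℝ) (𝔅 : Fin k → Matrix (Fin d) (Fin n) ℝ)
    (C : Matrix (Fin n) (Fin d) ℝ) (D : Matrix (Fin n) (Fin n) ℝ)
    (Q : Matrix (Fin d) (Fin d) ℝ) (hQ : Q.PosSemidef)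
    (hPHS : ∃ (J R : Matrix (Fin d) (Fin d) ℝ)
        (𝔄bar : Fin k → Matrix (Fin d) (Fin d) ℝ)
        (F P : Matrix (Fin d) (Fin n) ℝ)
        (S N : Matrix (Fin n) (Fin n) ℝ),
      Jᵀ = -J ∧ Rᵀ = R ∧ Sᵀ = S ∧ Nᵀ = -N ∧
      (Matrix.fromBlocks R P Pᵀ S).PosSemidef ∧
      A = (J - R - (1 / 2 : ℝ) • ∑ j : Fin k, (𝔄bar j)ᵀ * Q * 𝔄bar j) * Q ∧
      B = F - P ∧
      (∀ j : Fin k, 𝔄 j = 𝔄bar j * Q) ∧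
      C = (F + P + ∑ j : Fin k, (𝔄bar j)ᵀ * Q * 𝔅 j)ᵀ * Q ∧
      D = S + N + (1 / 2 : ℝ) • ∑ j : Fin k, (𝔅 j)ᵀ * Q * 𝔅 j) :
    (-(frakM A B C D 𝔄 𝔅 Q)).PosSemidef := by
  obtain ⟨J, R, 𝔄bar, F, P, S, N, hJ, hR, hS, hN, hW, hA, hB, h𝔄, hC, hD⟩ := hPHS
  have hQt : Qᵀ = Q := by
    have h := hQ.isHermitian.eq
    rwa [conjTranspose_eq_transpose_of_trivial] at h
  -- the three sums, and how they transpose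
  have e1 : ∑ j : Fin k, (𝔄 j)ᵀ * Q * 𝔄 j
      = Q * (∑ j : Fin k, (𝔄bar j)ᵀ * Q * 𝔄bar j) * Q := by
    simp only [h𝔄, transpose_mul, hQt, Finset.mul_sum, Finset.sum_mul, Matrix.mul_assoc]
  have e2 : ∑ j : Fin k, (𝔄 j)ᵀ * Q * 𝔅 j
      = Q * (∑ j : Fin k, (𝔄bar j)ᵀ * Q * 𝔅 j) := by
    simp only [h𝔄, transpose_mul, hQt, Matrix.mul_sum, Matrix.mul_assoc]
  have e3 : ∑ j : Fin k, (𝔅 j)ᵀ * Q * 𝔄 j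
      = (∑ j : Fin k, (𝔄bar j)ᵀ * Q * 𝔅 j)ᵀ * Q := by
    simp only [h𝔄, transpose_sum, transpose_mul, transpose_transpose, hQt, Matrix.sum_mul,
      Matrix.mul_assoc]
  have t1 : (∑ j : Fin k, (𝔄bar j)ᵀ * Q * 𝔄bar j)ᵀ = ∑ j : Fin k, (𝔄bar j)ᵀ * Q * 𝔄bar j := by
    simp only [transpose_sum, transpose_mul, transpose_transpose, hQt, Matrix.mul_assoc]
  have t2 : (∑ j : Fin k, (𝔅 j)ᵀ * Q * 𝔅 j)ᵀ = ∑ j : Fin k, (𝔅 j)ᵀ * Q * 𝔅 j := by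
    simp only [transpose_sum, transpose_mul, transpose_transpose, hQt, Matrix.mul_assoc]
  have key : -(frakM A B C D 𝔄 𝔅 Q) = (2 : ℝ) •
      ((fromBlocks Q 0 0 (1 : Matrix (Fin n) (Fin n) ℝ))ᴴ * fromBlocks R P Pᵀ S *
        fromBlocks Q 0 0 (1 : Matrix (Fin n) (Fin n) ℝ)) := by
    unfold frakM
    rw [e1, e2, e3, hA, hB, hC, hD]
    generalize (∑ j : Fin k, (𝔄bar j)ᵀ * Q * 𝔄bar j) = X at *
    generalize (∑ j : Fin k, (𝔄bar j)ᵀ * Q * 𝔅 j) = Y at *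
    generalize (∑ j : Fin k, (𝔅 j)ᵀ * Q * 𝔅 j) = Z at *
    rw [conjTranspose_eq_transpose_of_trivial, fromBlocks_transpose, fromBlocks_multiply,
      fromBlocks_multiply, fromBlocks_neg, fromBlocks_smul]
    simp only [transpose_mul, transpose_add, transpose_sub, transpose_smul, transpose_transpose,
      hQt, hJ, hR, hS, hN, t1, t2, transpose_zero, transpose_one, Matrix.mul_zero,
      Matrix.zero_mul, Matrix.mul_one, Matrix.one_mul, add_zero, zero_add,
      Matrix.mul_add, Matrix.add_mul, Matrix.mul_sub, Matrix.sub_mul, Matrix.mul_smul,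
      Matrix.smul_mul, Matrix.mul_neg, Matrix.neg_mul, Matrix.mul_assoc]
    congr 1 <;> module
  rw [key]
  exact (hW.conjTranspose_mul_mul_same _).smul (by norm_num)
end

section
/- Let A ∈ ℝ^{d×d}, B ∈ ℝ^{d×n}, 𝔄(j) ∈ ℝ^{d×d}, 𝔅(j) ∈ ℝ^{d×n} (j = 1,…,k), C ∈ ℝ^{n×d}, D ∈ ℝ^{n×n}, and let Q ∈ ℝ^{d×d} be symmetric positive semidefinite. Assume that ker(Q) ⊆ ker(A), ker(Q) ⊆ ker(C), and ker(Q) ⊆ ker(𝔄(j)) for all j = 1,…,k, and that 𝔐_Q is negative semidefinite. Then A, B, 𝔄(j), 𝔅(j) (j = 1,…,k), C, D form an SLTI-PHS structure with matrix Q, i.e., there exist J, R, 𝔄̄(j) ∈ ℝ^{d×d} (j = 1,…,k), F, P ∈ ℝ^{d×n}, S, N ∈ ℝ^{n×n} with Jᵀ = −J, Rᵀ = R, Sᵀ = S, Nᵀ = −N, the block matrix [[R, P], [Pᵀ, S]] positive semidefinite, and A = (J − R − ½ Σ_{j=1}^k 𝔄̄(j)ᵀ Q 𝔄̄(j))Q,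 B = F − P, 𝔄(j) = 𝔄̄(j)Q for all j, C = (F + P + Σ_{j=1}^k 𝔄̄(j)ᵀ Q 𝔅(j))ᵀ Q, D = S + N + ½ Σ_{j=1}^k 𝔅(j)ᵀ Q 𝔅(j). -/
open Matrix

/-- Every real positive semidefinite matrix has a symmetric generalized inverse. -/
theorem exists_symm_ginv {d : ℕ} (Q : Matrix (Fin d) (Fin d) ℝ) (hQ : Q.PosSemidef) :
    ∃ X : Matrix (Fin d) (Fin d) ℝ, Xᵀ = X ∧ Q * X * Q = Q := by
  have hH := hQ.isHermitian
  have h := hH.spectral_theorem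
  rw [Unitary.conjStarAlgAut_apply] at h
  set U : Matrix (Fin d) (Fin d) ℝ := (hH.eigenvectorUnitary : Matrix (Fin d) (Fin d) ℝ) with hU
  have hUU : star U * U = 1 := Unitary.coe_star_mul_self hH.eigenvectorUnitary
  set L : Matrix (Fin d) (Fin d) ℝ := diagonal (RCLike.ofReal ∘ hH.eigenvalues) with hL
  set L' : Matrix (Fin d) (Fin d) ℝ := diagonal (fun i => (hH.eigenvalues i)⁻¹) with hL'
  have hLL : L * L' * L = L := by
    rw [hL, hL', diagonal_mul_diagonal, diagonal_mul_diagonal]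
    congr 1
    funext i
    simp
  refine ⟨U * L' * star U, ?_, ?_⟩
  · rw [star_eq_conjTranspose, conjTranspose_eq_transpose_of_trivial]
    simp [hL', Matrix.mul_assoc]
  · calc Q * (U * L' * star U) * Q
        = (U * L * star U) * (U * L' * star U) * (U * L * star U) := by rw [← h]
      _ = U * (L * (star U * U) * L' * (star U * U) * L) * star U := by
          simp only [Matrix.mul_assoc]
      _ = Q := by rw [hUU, Matrix.mul_one, Matrix.mul_one, hLL, ← h]

/-- Kernel inclusion gives factorization through the generalized inverse. -/
theorem mul_ginv_mul {d m : ℕ} (Q X : Matrix (Fin d) (Fin d) ℝ) (hX : Q * X * Q = Q)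
    (G : Matrix (Fin m) (Fin d) ℝ) (hG : ∀ x : Fin d → ℝ, Q *ᵥ x = 0 → G *ᵥ x = 0) :
    G * X * Q = G := by
  apply Matrix.ext_of_mulVec_single
  intro i
  have h := hG (X *ᵥ (Q *ᵥ Pi.single i 1) - Pi.single i 1) (by
    rw [mulVec_sub, mulVec_mulVec, mulVec_mulVec, hX, sub_self])
  rw [mulVec_sub, mulVec_mulVec, mulVec_mulVec, sub_eq_zero] at h
  exact h

/-- If `Q` is positive semidefinite, `ker(Q)` is contained in the kernels of `A`, `C`
and all `𝔄(j)`, and `𝔐_Q ≤ 0`, then the system is an SLTI-PHS with `Q`. -/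
theorem SLTIPHS_of_kernel_cond_and_negSemidef {d n k : ℕ}
    (A : Matrix (Fin d) (Fin d) ℝ) (B : Matrix (Fin d) (Fin n) ℝ)
    (𝔄 : Fin k → Matrix (Fin d) (Fin d) ℝ) (𝔅 : Fin k → Matrix (Fin d) (Fin n) ℝ)
    (C : Matrix (Fin n) (Fin d) ℝ) (D : Matrix (Fin n) (Fin n) ℝ)
    (Q : Matrix (Fin d) (Fin d) ℝ) (hQ : Q.PosSemidef)
    (hkerA : ∀ x : Fin d → ℝ, Q *ᵥ x = 0 → A *ᵥ x = 0)
    (hkerC : ∀ x : Fin d → ℝ, Q *ᵥ x = 0 → C *ᵥ x = 0)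
    (hker𝔄 : ∀ (j : Fin k) (x : Fin d → ℝ), Q *ᵥ x = 0 → 𝔄 j *ᵥ x = 0)
    (hM : (-(frakM A B C D 𝔄 𝔅 Q)).PosSemidef) :
    ∃ (J R : Matrix (Fin d) (Fin d) ℝ)
      (𝔄bar : Fin k → Matrix (Fin d) (Fin d) ℝ)
      (F P : Matrix (Fin d) (Fin n) ℝ)
      (S N : Matrix (Fin n) (Fin n) ℝ),
      Jᵀ = -J ∧ Rᵀ = R ∧ Sᵀ = S ∧ Nᵀ = -N ∧
      (Matrix.fromBlocks R P Pᵀ S).PosSemidef ∧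
      A = (J - R - (1 / 2 : ℝ) • ∑ j : Fin k, (𝔄bar j)ᵀ * Q * 𝔄bar j) * Q ∧
      B = F - P ∧
      (∀ j : Fin k, 𝔄 j = 𝔄bar j * Q) ∧
      C = (F + P + ∑ j : Fin k, (𝔄bar j)ᵀ * Q * 𝔅 j)ᵀ * Q ∧
      D = S + N + (1 / 2 : ℝ) • ∑ j : Fin k, (𝔅 j)ᵀ * Q * 𝔅 j := by
  obtain ⟨X, hXs, hX⟩ := exists_symm_ginv Q hQ
  have hQs : Qᵀ = Q := by
    have := hQ.isHermitian.eq
    rwa [conjTranspose_eq_transpose_of_trivial] at this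
  have hA := mul_ginv_mul Q X hX A hkerA
  have hC := mul_ginv_mul Q X hX C hkerC
  have h𝔄 := fun j => mul_ginv_mul Q X hX (𝔄 j) (hker𝔄 j)
  obtain ⟨E11, hE11⟩ : ∃ E, E = ∑ j : Fin k, (𝔄 j)ᵀ * Q * 𝔄 j := ⟨_, rfl⟩
  obtain ⟨E12, hE12⟩ : ∃ E, E = ∑ j : Fin k, (𝔄 j)ᵀ * Q * 𝔅 j := ⟨_, rfl⟩
  obtain ⟨E21, hE21⟩ : ∃ E, E = ∑ j : Fin k, (𝔅 j)ᵀ * Q * 𝔄 j := ⟨_, rfl⟩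
  obtain ⟨E22, hE22⟩ : ∃ E, E = ∑ j : Fin k, (𝔅 j)ᵀ * Q * 𝔅 j := ⟨_, rfl⟩
  have t11 : E11ᵀ = E11 := by
    simp [hE11, transpose_sum, hQs, Matrix.mul_assoc]
  have t12 : E12ᵀ = E21 := by
    simp [hE12, hE21, transpose_sum, hQs, Matrix.mul_assoc]
  have t22 : E22ᵀ = E22 := by
    simp [hE22, transpose_sum, hQs, Matrix.mul_assoc]
  have e21 : E21 * X * Q = E21 := by
    simp only [hE21, Matrix.sum_mul]
    refine Finset.sum_congr rfl fun j _ => ?_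
    rw [Matrix.mul_assoc, Matrix.mul_assoc, ← Matrix.mul_assoc (𝔄 j), h𝔄]
  have s1 : ∑ j : Fin k, (𝔄 j * X)ᵀ * Q * (𝔄 j * X) = X * E11 * X := by
    simp [hE11, Matrix.mul_sum, Matrix.sum_mul, hXs, Matrix.mul_assoc]
  have s2 : ∑ j : Fin k, (𝔄 j * X)ᵀ * Q * 𝔅 j = X * E12 := by
    simp [hE12, Matrix.mul_sum, hXs, Matrix.mul_assoc]
  unfold frakM at hM
  rw [← hE11, ← hE12, ← hE21, ← hE22] at hM
  have hX' : ∀ {m : ℕ} (Z : Matrix (Fin d) (Fin m) ℝ), Q * (X * (Q * Z)) = Q * Z := by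
    intro m Z
    rw [← Matrix.mul_assoc, ← Matrix.mul_assoc, hX]
  have hXr : Q * (X * Q) = Q := by rw [← Matrix.mul_assoc, hX]
  rw [Matrix.mul_assoc] at hA hC e21
  refine ⟨A * X - X * Aᵀ + (1 / 2 : ℝ) • (X * Aᵀ * Q * X - X * Q * A * X),
    -((1 / 2 : ℝ) • (X * (Q * A + Aᵀ * Q + E11) * X)),
    fun j => 𝔄 j * X,
    B - (1 / 2 : ℝ) • (X * (Q * B - Cᵀ + E12)),
    -((1 / 2 : ℝ) • (X * (Q * B - Cᵀ + E12))),
    (1 / 2 : ℝ) • (D + Dᵀ) - (1 / 2 : ℝ) • E22,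
    (1 / 2 : ℝ) • (D - Dᵀ), ?_, ?_, ?_, ?_, ?_, ?_, ?_, ?_, ?_, ?_⟩
  · simp only [transpose_add, transpose_sub, transpose_smul, transpose_mul, transpose_transpose,
      hXs, hQs, Matrix.mul_assoc]
    module
  · simp only [transpose_add, transpose_neg, transpose_smul, transpose_mul, transpose_transpose,
      hXs, hQs, t11, Matrix.mul_assoc]
    rw [add_comm (Aᵀ * Q) (Q * A)]
  · simp only [transpose_add, transpose_sub, transpose_smul, transpose_transpose, t22]
    module
  · simp only [transpose_sub, transpose_smul, transpose_transpose]
    module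
  · have h1 := (hM.mul_mul_conjTranspose_same (fromBlocks X 0 0 (1 : Matrix (Fin n) (Fin n) ℝ))).smul
      (show (0 : ℝ) ≤ 1 / 2 by norm_num)
    convert h1 using 1
    rw [conjTranspose_eq_transpose_of_trivial, fromBlocks_transpose, fromBlocks_neg,
      fromBlocks_multiply, fromBlocks_multiply, fromBlocks_smul]
    simp only [transpose_add, transpose_sub, transpose_neg, transpose_smul, transpose_mul,
      transpose_transpose, transpose_zero, transpose_one, hXs, hQs, t12, Matrix.mul_zero,
      Matrix.zero_mul, Matrix.mul_one, Matrix.one_mul, add_zero, zero_add, Matrix.mul_neg,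
      Matrix.neg_mul, Matrix.mul_add, Matrix.add_mul, Matrix.mul_sub, Matrix.sub_mul]
    rw [Matrix.fromBlocks_inj]
    refine ⟨?_, ?_, ?_, ?_⟩ <;> module
  · rw [s1]
    simp only [Matrix.mul_add, Matrix.add_mul, Matrix.sub_mul, Matrix.smul_mul, Matrix.neg_mul,
      Matrix.mul_assoc, hXr, hA]
    module
  · module
  · intro j
    exact (h𝔄 j).symm
  · rw [s2]
    simp only [transpose_add, transpose_sub, transpose_neg, transpose_smul, transpose_mul,
      transpose_transpose, hXs, hQs, t12, Matrix.add_mul, Matrix.sub_mul, Matrix.smul_mul,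
      Matrix.neg_mul, Matrix.mul_assoc, hXr, hC, e21]
    module
  · rw [← hE22]
    module
end

section
/- Let K ∈ ℝ^{m×m} be skew-symmetric (Kᵀ = −K) and let D ∈ ℝ^{m×m} be symmetric positive semidefinite. Then the matrix Id − K·D is invertible. -/
open Matrix

/-- If `K` is skew-symmetric and `D` is symmetric positive semidefinite, then
`Id − K·D` is invertible. -/
theorem isUnit_one_sub_skew_mul_posSemidef {m : ℕ}
    (K D : Matrix (Fin m) (Fin m) ℝ)
    (hK : Kᵀ = -K) (hD : D.PosSemidef) :
    IsUnit (1 - K * D) := by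
  rw [Matrix.isUnit_iff_isUnit_det, isUnit_iff_ne_zero]
  intro h
  obtain ⟨x, hx0, hx⟩ := Matrix.exists_mulVec_eq_zero_iff.mpr h
  rw [Matrix.sub_mulVec, Matrix.one_mulVec, sub_eq_zero, ← Matrix.mulVec_mulVec] at hx
  have skew : ∀ y : Fin m → ℝ, (K *ᵥ y) ⬝ᵥ y = 0 := by
    intro y
    have h1 : (K *ᵥ y) ⬝ᵥ y = -((K *ᵥ y) ⬝ᵥ y) := by
      conv_lhs => rw [dotProduct_comm, Matrix.dotProduct_mulVec, ← Matrix.mulVec_transpose, hK,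
        Matrix.neg_mulVec, neg_dotProduct]
    linarith
  have h2 : D *ᵥ x = 0 := by
    rw [← hD.dotProduct_mulVec_zero_iff, star_trivial]
    have h3 := skew (D *ᵥ x)
    rwa [← hx] at h3
  apply hx0
  rw [hx, h2, Matrix.mulVec_zero]
end
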